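/- arXiv:2402.07762 — 6 statements merged into one kernel-verified Lean document; each statement's English description precedes it below -/
import Mathlib

section
/- Let $\mathbf{s}$ be a staging of $\mathcal{X}_{[i]}$ in which every stage has exactly two context variables, and suppose $\mathbf{s}$ contains a stage with set of context variables $\{j,k\}$. Then every stage in $\mathbf{s}$ has a set of context variables $S$ satisfying $j \in S$ or $k \in S$. -/
/-!
Two stages whose sets of context variables are disjoint always meet: a common point is obtained by
prescribing the two contexts separately. So a stage with context variables `S`, `j ∉ S` and `k ∉ S`,
meets the stage with context variables `{j, k}`, and the two are equal since a staging is a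
partition. But membership in the former does not depend on the coordinate `j`, while membership in
the latter fixes it, which is impossible because `d j ≥ 2`.
-/

open Finset

/-- The stage `𝒮(x_S)` with set of context variables `S` and stage-defining context given by
the coordinates of `x` lying in `S`: the set of points of the level `∀ k : Fin i, Fin (d k)`
that agree with `x` on the coordinates in `S`. -/
def stage {i : ℕ} (d : Fin i → ℕ) (S : Finset (Fin i)) (x : ∀ k : Fin i, Fin (d k)) :
    Set (∀ k : Fin i, Fin (d k)) :=
  {y | ∀ k ∈ S, y k = x k}

/-- A staging of the level `∀ k : Fin i, Fin (d k)`: a partition of the level into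
pairwise disjoint nonempty stages whose union is the whole level. -/
structure IsStaging {i : ℕ} (d : Fin i → ℕ)
    (𝔰 : Set (Set (∀ k : Fin i, Fin (d k)))) : Prop where
  isStage : ∀ s ∈ 𝔰, ∃ S x, s = stage d S x
  nonempty : ∀ s ∈ 𝔰, s.Nonempty
  pairwiseDisjoint : ∀ s ∈ 𝔰, ∀ t ∈ 𝔰, s ≠ t → Disjoint s t
  covers : ∀ y, ∃ s ∈ 𝔰, y ∈ s

/-- If a staging in which every stage has exactly two context variables contains a stage with
set of context variables `{j, k}`, then every stage in the staging has a set of context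
variables containing `j` or containing `k`. -/
theorem staging_two_context_variables_either
    (i : ℕ) (hi : 2 ≤ i) (d : Fin i → ℕ) (hd : ∀ m, 2 ≤ d m)
    (𝔰 : Set (Set (∀ k : Fin i, Fin (d k)))) (h : IsStaging d 𝔰)
    (h2 : ∀ s ∈ 𝔰, ∃ S x, s = stage d S x ∧ S.card = 2)
    (j k : Fin i) (hjk : j ≠ k) (x : ∀ m : Fin i, Fin (d m))
    (hmem : stage d ({j, k} : Finset (Fin i)) x ∈ 𝔰) :
    ∀ s ∈ 𝔰, ∀ (S : Finset (Fin i)) (y : ∀ m : Fin i, Fin (d m)),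
      s = stage d S y → j ∈ S ∨ k ∈ S := by
  intro s hs S y hsy
  by_contra! hc
  obtain ⟨hj, hk⟩ := hc
  subst hsy
  let z : ∀ m : Fin i, Fin (d m) := fun m => if m ∈ S then y m else x m
  have hz₁ : z ∈ stage d S y := fun m hm => if_pos hm
  have hz₂ : z ∈ stage d ({j, k} : Finset (Fin i)) x := by
    intro m hm
    refine if_neg fun hmS => ?_
    rcases Finset.mem_insert.1 hm with rfl | hm
    · exact hj hmS
    · exact hk (Finset.mem_singleton.1 hm ▸ hmS)
  have heq : stage d S y = stage d ({j, k} : Finset (Fin i)) x := by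
    by_contra hne
    exact Set.disjoint_left.1 (h.pairwiseDisjoint _ hs _ hmem hne) hz₁ hz₂
  have : Nontrivial (Fin (d j)) := Fin.nontrivial_iff_two_le.2 (hd j)
  obtain ⟨a, ha⟩ := exists_ne (x j)
  have hu : Function.update z j a ∈ stage d S y := by
    intro m hm
    have hmj : m ≠ j := fun e => hj (e ▸ hm)
    rw [Function.update_of_ne hmj]
    exact hz₁ m hm
  rw [heq] at hu
  have hu' := hu j (Finset.mem_insert_self _ _)
  rw [Function.update_self] at hu'
  exact ha hu'
end

section
/- Let $\mathbf{s}$ be a staging of $\mathcal{X}_{[i]}$ in which every stage has exactly two context variables. Then there exists an index $k \in \{1,\dots,i\}$ such that $k$ belongs to the set of context variables of every stage in $\mathbf{s}$. -/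
/-!
Two distinct disjoint stages must disagree at a context variable they share, so the sets of context
variables form an intersecting family of two-element sets (`IsStaging.exists_conflict`). Such a
family either has a common element or contains a triangle `{a, b}`, `{b, c}`, `{a, c}`. In the
triangle case take a point with the value at `a` from the first stage, at `b` from the second and at `c` from the
third. The stage through the resulting point can conflict with the first stage only at `b`, with the
second only at `c`, and with the third only at `a`. So its context set contains `b` unless it is
`{a, b}`, contains `c` unless it is `{b, c}`, and contains `a` unless it is `{a, c}`; no two-element
set satisfies all three conditions.
-/

open Finset

/-- Inclusion of stages reverses inclusion of context sets: a coordinate in `S` but not in `T` can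
be moved off its prescribed value inside `stage d T z`, as it takes at least two values. -/
lemma subset_of_stage_subset {i : ℕ} {d : Fin i → ℕ} (hd : ∀ m, 2 ≤ d m)
    {S T : Finset (Fin i)} {x z : ∀ k : Fin i, Fin (d k)}
    (h : stage d T z ⊆ stage d S x) : S ⊆ T := by
  intro k hk
  by_contra hkT
  have : Nontrivial (Fin (d k)) := Fin.nontrivial_iff_two_le.mpr (hd k)
  obtain ⟨v, hv⟩ := exists_ne (x k)
  have hmem : Function.update z k v ∈ stage d T z := by
    intro m hm
    have hmk : m ≠ k := fun e => hkT (e ▸ hm)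
    simp [hmk]
  have := h hmem k hk
  simp at this
  exact hv this

/-- Stages with different context sets are distinct, hence disjoint, so their contexts conflict at
a shared variable: otherwise gluing the two contexts would give a common point. -/
lemma IsStaging.exists_conflict {i : ℕ} {d : Fin i → ℕ} (hd : ∀ m, 2 ≤ d m)
    {𝔰 : Set (Set (∀ k : Fin i, Fin (d k)))} (h : IsStaging d 𝔰)
    {S T : Finset (Fin i)} {x z : ∀ k : Fin i, Fin (d k)}
    (hS : stage d S x ∈ 𝔰) (hT : stage d T z ∈ 𝔰) (hne : S ≠ T) :
    ∃ k, k ∈ S ∧ k ∈ T ∧ x k ≠ z k := by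
  by_contra! hc
  have hst : stage d S x ≠ stage d T z := fun e =>
    hne (Subset.antisymm (subset_of_stage_subset hd e.ge) (subset_of_stage_subset hd e.le))
  refine Set.disjoint_left.mp (h.pairwiseDisjoint _ hS _ hT hst)
    (?_ : (fun k => if k ∈ S then x k else z k) ∈ stage d S x) ?_
  · intro k hk
    simp [hk]
  · intro k hk
    by_cases hkS : k ∈ S
    · simp [hkS, hc k hkS hk]
    · simp [hkS]

/-- For every staging in which every stage has exactly two context variables, there is an index
`k` belonging to the set of context variables of every stage. -/
theorem staging_two_context_variables_common_index
    (i : ℕ) (hi : 2 ≤ i) (d : Fin i → ℕ) (hd : ∀ m, 2 ≤ d m)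
    (𝔰 : Set (Set (∀ k : Fin i, Fin (d k)))) (h : IsStaging d 𝔰)
    (h2 : ∀ s ∈ 𝔰, ∃ S x, s = stage d S x ∧ S.card = 2) :
    ∃ k : Fin i, ∀ s ∈ 𝔰, ∀ (S : Finset (Fin i)) (x : ∀ m : Fin i, Fin (d m)),
      s = stage d S x → k ∈ S := by
  by_contra! hno
  -- The context set is unique, so a stage of the staging missing `k` in some presentation has a
  -- two-element context set missing `k`.
  have key : ∀ k, ∃ S x, stage d S x ∈ 𝔰 ∧ S.card = 2 ∧ k ∉ S := by
    intro k
    obtain ⟨s, hs, S, x, rfl, hk⟩ := hno k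
    obtain ⟨T, z, e, hT⟩ := h2 _ hs
    refine ⟨T, z, e ▸ hs, hT, fun hkT => hk (subset_of_stage_subset hd e.le hkT)⟩
  obtain ⟨S₀, x₀, h₀, c₀, -⟩ := key ⟨0, by omega⟩
  obtain ⟨a, b, hab, rfl⟩ := card_eq_two.mp c₀
  obtain ⟨S₁, x₁, h₁, c₁, ha₁⟩ := key a
  obtain ⟨S₂, x₂, h₂, c₂, hb₂⟩ := key b
  have hb₁ : b ∈ S₁ := by
    obtain ⟨k, hk, hk', -⟩ := h.exists_conflict hd h₀ h₁ (by rintro rfl; simp at ha₁)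
    grind
  have ha₂ : a ∈ S₂ := by
    obtain ⟨k, hk, hk', -⟩ := h.exists_conflict hd h₀ h₂ (by rintro rfl; simp at hb₂)
    grind
  obtain ⟨c, hc₁, hc₂, -⟩ := h.exists_conflict hd h₁ h₂ (by rintro rfl; exact ha₁ ha₂)
  have hca : c ≠ a := by rintro rfl; exact ha₁ hc₁
  have hcb : c ≠ b := by rintro rfl; exact hb₂ hc₂
  obtain rfl : {b, c} = S₁ :=
    eq_of_subset_of_card_le (by grind) (by rw [c₁, card_pair hcb.symm])
  obtain rfl : {a, c} = S₂ :=
    eq_of_subset_of_card_le (by grind) (by rw [c₂, card_pair hca.symm])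
  let y : ∀ k : Fin i, Fin (d k) := fun k =>
    if k = a then x₀ k else if k = b then x₁ k else x₂ k
  have ya : y a = x₀ a := by simp [y]
  have yb : y b = x₁ b := by simp [y, hab.symm]
  have yc : y c = x₂ c := by simp [y, hca, hcb]
  obtain ⟨s, hs, hy⟩ := h.covers y
  obtain ⟨S, x, rfl, hS⟩ := h2 s hs
  have hb : S ≠ {a, b} → b ∈ S := by
    intro hne
    obtain ⟨k, hk, hk', hxk⟩ := h.exists_conflict hd hs h₀ hne
    rw [← hy k hk] at hxk
    grind
  have hc : S ≠ {b, c} → c ∈ S := by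
    intro hne
    obtain ⟨k, hk, hk', hxk⟩ := h.exists_conflict hd hs h₁ hne
    rw [← hy k hk] at hxk
    grind
  have ha : S ≠ {a, c} → a ∈ S := by
    intro hne
    obtain ⟨k, hk, hk', hxk⟩ := h.exists_conflict hd hs h₂ hne
    rw [← hy k hk] at hxk
    grind
  by_cases e₀ : S = {a, b}
  · grind
  by_cases e₁ : S = {b, c}
  · grind
  by_cases e₂ : S = {a, c}
  · grind
  have hsub : {a, b, c} ⊆ S := by grind
  have := card_le_card hsub
  rw [card_eq_three.mpr ⟨a, b, c, hab, hca.symm, hcb.symm, rfl⟩] at this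
  omega
end

section
/- Every staging of $\mathcal{X}_{[i]}$ in which every stage has exactly two context variables is of the following form: there exist an index $k \in \{1,\dots,i\}$ and, for each outcome $x_k \in \{0,\dots,d_k-1\}$, an index $j_{x_k} \in \{1,\dots,i\} \setminus \{k\}$ (indices may repeat), such that the staging is $\{\mathcal{S}(x_{j_{x_k}} x_k) : x_k \in \{0,\dots,d_k-1\},\ x_{j_{x_k}} \in \{0,\dots,d_{j_{x_k}}-1\}\}$, i.e. the stages are exactly the sets of points whose $k$-th coordinate equals $x_k$ and whose $j_{x_k}$-th coordinate equals $x_{j_{x_k}}$. Conversely, every collection of this form is such a staging. -/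
/-!
Two disjoint stages must have a common context variable on which their contexts differ. Hence
the context sets of a staging with two context variables per stage form a pairwise
intersecting family of 2-sets, so it is a star or contains a triangle `{a,b}, {b,c}, {a,c}`.
In the triangle case, a point taking its `b`-value from the first stage, its `c`-value from
the second and its `a`-value from the third is in none of the three, and the stage that
contains it must use `a`, `b` and `c` as context variables to be disjoint from them, which is
impossible (`exists_common_index`). In the star case with centre `k`, two stages with the
same value of `k` can only be separated by their second context variable, so this second
variable depends only on the value of `k`.

Choosing for each point `y` the context set `S y` of the stage containing it turns the problem
into one about the function `S`.
-/

open Finset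

/-- Uniqueness of context sets, which needs at least two outcomes in each coordinate. -/
lemma subset_of_stage_eq {i : ℕ} {d : Fin i → ℕ} (hd : ∀ m, 2 ≤ d m) {S T : Finset (Fin i)}
    {x y : ∀ k : Fin i, Fin (d k)} (h : stage d S x = stage d T y) : S ⊆ T := by
  intro k hk
  by_contra hT
  have : Nontrivial (Fin (d k)) := Fin.nontrivial_iff_two_le.2 (hd k)
  obtain ⟨v, hv⟩ := exists_ne (x k)
  have hm : Function.update y k v ∈ stage d T y := by
    intro m hm
    have : m ≠ k := fun e => hT (e ▸ hm)
    simp [Function.update_of_ne this]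
  rw [← h] at hm
  exact hv (by simpa using hm k hk)

/-- `S y` is the context set of the stage containing `y`; hypothesis `H` says that any two
stages coincide or are separated by a common context variable. -/
lemma exists_common_index {i : ℕ} {d : Fin i → ℕ} (S : (∀ k : Fin i, Fin (d k)) → Finset (Fin i))
    (y₀ : ∀ k : Fin i, Fin (d k)) (hc : ∀ y, (S y).card = 2)
    (H : ∀ y z, (S y = S z ∧ ∀ m ∈ S y, y m = z m) ∨ ∃ m, m ∈ S y ∧ m ∈ S z ∧ y m ≠ z m) :
    ∃ k, ∀ y, k ∈ S y := by
  by_contra! hno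
  obtain ⟨a, b, hab, h0⟩ := Finset.card_eq_two.1 (hc y₀)
  obtain ⟨z, hz⟩ := hno a
  obtain ⟨w, hw⟩ := hno b
  have hyz : b ∈ S z ∧ y₀ b ≠ z b := by
    rcases H y₀ z with ⟨e, -⟩ | ⟨m, h1, h2, h3⟩ <;> grind
  have hyw : a ∈ S w ∧ y₀ a ≠ w a := by
    rcases H y₀ w with ⟨e, -⟩ | ⟨m, h1, h2, h3⟩ <;> grind
  obtain ⟨c, hcz, hcw, hne⟩ : ∃ c, c ∈ S z ∧ c ∈ S w ∧ z c ≠ w c := by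
    rcases H z w with ⟨e, -⟩ | h
    · exact absurd (e ▸ hyz.1) hw
    · exact h
  have hca : c ≠ a := fun e => hz (e ▸ hcz)
  have hcb : c ≠ b := fun e => hw (e ▸ hcw)
  have eq2 : ∀ y, ∀ p q : Fin i, p ≠ q → p ∈ S y → q ∈ S y → S y = {p, q} := by
    intro y p q hpq hp hq
    refine (Finset.eq_of_subset_of_card_le (by simp [Finset.insert_subset_iff, hp, hq]) ?_).symm
    rw [hc, Finset.card_pair hpq]
  have ez := eq2 z b c hcb.symm hyz.1 hcz
  have ew := eq2 w a c hca.symm hyw.1 hcw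
  -- The point lying in none of the three stages of the triangle.
  obtain ⟨p, pa, pb, pc⟩ : ∃ p : ∀ k : Fin i, Fin (d k), p a = w a ∧ p b = y₀ b ∧ p c = z c :=
    ⟨Function.update (Function.update y₀ a (w a)) c (z c),
      by simp [Function.update_of_ne hca.symm],
      by simp [Function.update_of_ne hcb.symm, Function.update_of_ne hab.symm], by simp⟩
  have ha : a ∈ S p := by
    rcases H p y₀ with ⟨e, -⟩ | ⟨m, h1, h2, h3⟩ <;> grind
  have hb : b ∈ S p := by
    rcases H p z with ⟨e, -⟩ | ⟨m, h1, h2, h3⟩ <;> grind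
  have hcp : c ∈ S p := by
    rcases H p w with ⟨e, -⟩ | ⟨m, h1, h2, h3⟩ <;> grind
  have := eq2 p a b hab ha hb
  grind

/-- A collection of subsets of the level is a staging in which every stage has exactly two
context variables if and only if there are an index `k` and, for each outcome `v` of
coordinate `k`, an index `j v ≠ k` (indices may repeat), such that the collection consists
exactly of the stages `𝒮(x_{j v} x_k)`, i.e. of the sets of points whose `k`-th coordinate
equals `v` and whose `j v`-th coordinate equals a fixed outcome. -/
theorem staging_two_context_variables_classification
    (i : ℕ) (hi : 2 ≤ i) (d : Fin i → ℕ) (hd : ∀ m, 2 ≤ d m)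
    (𝔰 : Set (Set (∀ k : Fin i, Fin (d k)))) :
    (IsStaging d 𝔰 ∧ ∀ s ∈ 𝔰, ∃ S x, s = stage d S x ∧ S.card = 2) ↔
    ∃ k : Fin i, ∃ j : Fin (d k) → Fin i, (∀ v, j v ≠ k) ∧
      𝔰 = {s | ∃ x : ∀ m : Fin i, Fin (d m),
        s = stage d ({j (x k), k} : Finset (Fin i)) x} := by
  have rebase : ∀ (S : Finset (Fin i)) (x y : ∀ k : Fin i, Fin (d k)),
      y ∈ stage d S x → stage d S x = stage d S y := by
    intro S x y h
    ext z
    exact forall₂_congr fun m hm => by rw [h m hm]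
  constructor
  · rintro ⟨hs, h2⟩
    have ex : ∀ y, ∃ S : Finset (Fin i), S.card = 2 ∧ stage d S y ∈ 𝔰 := by
      intro y
      obtain ⟨s, hs1, hy⟩ := hs.covers y
      obtain ⟨S, x, rfl, hS⟩ := h2 s hs1
      exact ⟨S, hS, rebase S x y hy ▸ hs1⟩
    choose S hc hS using ex
    have H : ∀ y z, (S y = S z ∧ ∀ m ∈ S y, y m = z m) ∨
        ∃ m, m ∈ S y ∧ m ∈ S z ∧ y m ≠ z m := by
      intro y z
      by_cases e : stage d (S y) y = stage d (S z) z
      · left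
        refine ⟨(subset_of_stage_eq hd e).antisymm (subset_of_stage_eq hd e.symm), ?_⟩
        have : y ∈ stage d (S z) z := e ▸ fun m _ => rfl
        intro m hm
        exact this m (subset_of_stage_eq hd e hm)
      · right
        by_contra! hno
        -- If the contexts are compatible, gluing them gives a point of both stages.
        have hdis := hs.pairwiseDisjoint _ (hS y) _ (hS z) e
        rw [Set.disjoint_left] at hdis
        refine @hdis (fun m => if m ∈ S y then y m else z m) ?_ ?_
        · intro m hm
          simp [hm]
        · intro m hm
          by_cases h : m ∈ S y
          · simpa [h] using hno m h hm
          · simp [h]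
    let y₀ : ∀ k : Fin i, Fin (d k) := fun k => ⟨0, by have := hd k; omega⟩
    obtain ⟨k, hk⟩ := exists_common_index S y₀ hc H
    have hj : ∀ y, ∃ j, j ≠ k ∧ S y = {j, k} := by
      intro y
      obtain ⟨a, b, hab, e⟩ := Finset.card_eq_two.1 (hc y)
      have := hk y
      rw [e] at this
      rcases Finset.mem_insert.1 this with rfl | h
      · exact ⟨b, hab.symm, by rw [e, Finset.pair_comm]⟩
      · obtain rfl := Finset.mem_singleton.1 h
        exact ⟨a, hab, e⟩
    choose j hjk hSj using hj
    have key : ∀ y, S y = {j (Function.update y₀ k (y k)), k} := by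
      intro y
      rw [← hSj]
      rcases H y (Function.update y₀ k (y k)) with ⟨e, -⟩ | ⟨m, h1, h2, h3⟩
      · exact e
      · have hm : m ≠ k := by
          rintro rfl
          simp at h3
        rw [hSj] at h1 h2 ⊢
        rw [hSj]
        grind
    refine ⟨k, fun v => j (Function.update y₀ k v), fun v => hjk _, ?_⟩
    ext s
    simp only [Set.mem_ofPred_eq]
    constructor
    · intro h
      obtain ⟨x, hx⟩ := hs.nonempty s h
      refine ⟨x, ?_⟩
      rw [← key]
      by_contra hne
      exact Set.disjoint_left.1 (hs.pairwiseDisjoint _ h _ (hS x) hne) hx fun m _ => rfl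
    · rintro ⟨x, rfl⟩
      rw [← key]
      exact hS x
  · rintro ⟨k, j, hj, rfl⟩
    refine ⟨⟨?_, ?_, ?_, ?_⟩, ?_⟩
    · rintro s ⟨x, rfl⟩
      exact ⟨_, _, rfl⟩
    · rintro s ⟨x, rfl⟩
      exact ⟨x, fun m _ => rfl⟩
    · rintro s ⟨x, rfl⟩ t ⟨y, rfl⟩ hne
      refine Set.disjoint_left.2 fun z hx hy => hne ?_
      rw [rebase _ _ _ hx, rebase _ _ _ hy, ← hx k (by simp), ← hy k (by simp)]
    · intro y
      exact ⟨_, ⟨y, rfl⟩, fun m _ => rfl⟩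
    · rintro s ⟨x, rfl⟩
      exact ⟨_, x, rfl, Finset.card_pair (hj _)⟩
end

section
/- The number of stagings of $\mathcal{X}_{[i]}$ in which every stage has exactly two context variables equals $\binom{i}{2} + \sum_{k=1}^{i}\left((i-1)^{d_k} - (i-1)\right)$. -/
/-!
A staging is the same thing as a *context function*: a map `g` sending each point to the set of
context variables of its stage, subject to the condition that `g` is constant on each stage
(`IsContext`). This uses that a stage determines its context variables (`stage_inj`), and the
correspondence is `ofContext_injective` and `exists_ofContext_eq`.

Two stages of a staging must be separated by a common context variable (`IsContext.sep`), so the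
sets `g x` pairwise intersect. When all of them have two elements, they form either a star or a
triangle `{k,a}, {k,b}, {a,b}`. The triangle is impossible (`IsContext.mem_of_ne`): taking one
coordinate from each of the three stages gives a point whose own stage would need all of `k, a, b`
as context variables. In a star with centre `k` the second context variable depends only on the
coordinate `k`. Hence `g` is either constant, which gives `C(i,2)` stagings, or of the form
`x ↦ {k, f (x k)}` with `f` a nonconstant map into `{j // j ≠ k}`, and then `k` and `f` are
determined by `g` (`contextOf_injective`, `contextOf_surjective`). For each `k` there are
`(i-1)^(d k) - (i-1)` such maps `f`.
-/

open Finset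

variable {i : ℕ} {d : Fin i → ℕ}

lemma stage_subset_of_eq (hd : ∀ m, 2 ≤ d m) {S T : Finset (Fin i)}
    {x y : ∀ k : Fin i, Fin (d k)} (h : stage d S x = stage d T y) : S ⊆ T := by
  intro k hk
  by_contra hkT
  have : Nontrivial (Fin (d k)) := Fin.nontrivial_iff_two_le.2 (hd k)
  obtain ⟨v, hv⟩ := exists_ne (y k)
  have h1 : y ∈ stage d S x := by rw [h]; intro m _; rfl
  have h2 : Function.update y k v ∈ stage d S x := by
    rw [h]; intro m hm
    exact Function.update_of_ne (by rintro rfl; exact hkT hm) _ _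
  have h3 := h2 k hk
  rw [Function.update_self] at h3
  exact hv (h3.trans (h1 k hk).symm)

/-- A stage determines its set of context variables. -/
lemma stage_inj (hd : ∀ m, 2 ≤ d m) {S T : Finset (Fin i)}
    {x y : ∀ k : Fin i, Fin (d k)} (h : stage d S x = stage d T y) : S = T :=
  (stage_subset_of_eq hd h).antisymm (stage_subset_of_eq hd h.symm)

lemma stage_eq_of_mem {S : Finset (Fin i)} {x y : ∀ k : Fin i, Fin (d k)}
    (h : y ∈ stage d S x) : stage d S x = stage d S y := by
  ext z
  exact ⟨fun hz k hk => (hz k hk).trans (h k hk).symm,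
    fun hz k hk => (hz k hk).trans (h k hk)⟩

/-- A two-variable context function: it assigns to each point the pair of context variables of
the stage containing it, and is constant on each of the stages so defined. -/
structure IsContext (g : (∀ k : Fin i, Fin (d k)) → Finset (Fin i)) : Prop where
  consistent : ∀ x y, x ∈ stage d (g y) y → g x = g y
  card : ∀ x, (g x).card = 2

/-- The family of stages determined by a context function. -/
def ofContext (g : (∀ k : Fin i, Fin (d k)) → Finset (Fin i)) :
    Set (Set (∀ k : Fin i, Fin (d k))) :=
  Set.range fun x => stage d (g x) x

lemma mem_stage_self (S : Finset (Fin i)) (x : ∀ k : Fin i, Fin (d k)) : x ∈ stage d S x :=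
  fun _ _ => rfl

lemma IsContext.isStaging {g : (∀ k : Fin i, Fin (d k)) → Finset (Fin i)} (hg : IsContext g) :
    IsStaging d (ofContext g) where
  isStage := by rintro _ ⟨x, rfl⟩; exact ⟨_, _, rfl⟩
  nonempty := by rintro _ ⟨x, rfl⟩; exact ⟨x, mem_stage_self _ _⟩
  pairwiseDisjoint := by
    rintro _ ⟨x, rfl⟩ _ ⟨y, rfl⟩ hne
    rw [Set.disjoint_left]
    intro z hzx hzy
    refine hne ?_
    dsimp only at hzx hzy ⊢
    rw [stage_eq_of_mem hzx, stage_eq_of_mem hzy, ← hg.consistent _ _ hzx,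
      ← hg.consistent _ _ hzy]
  covers y := ⟨_, ⟨y, rfl⟩, mem_stage_self _ _⟩

lemma ofContext_injective (hd : ∀ m, 2 ≤ d m)
    {g g' : (∀ k : Fin i, Fin (d k)) → Finset (Fin i)}
    (hg' : IsContext g') (h : ofContext g = ofContext g') : g = g' := by
  funext x
  have hx : stage d (g x) x ∈ ofContext g' := h ▸ ⟨x, rfl⟩
  obtain ⟨y, hy⟩ := hx
  dsimp only at hy
  have hxy : x ∈ stage d (g' y) y := by rw [hy]; exact mem_stage_self _ _
  rw [hg'.consistent _ _ hxy]
  exact (stage_inj hd hy).symm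

lemma exists_ofContext_eq (hd : ∀ m, 2 ≤ d m) {𝔰 : Set (Set (∀ k : Fin i, Fin (d k)))}
    (hs : IsStaging d 𝔰) (h2 : ∀ s ∈ 𝔰, ∃ S x, s = stage d S x ∧ S.card = 2) :
    ∃ g, IsContext g ∧ ofContext g = 𝔰 := by
  have key : ∀ y, ∃ S : Finset (Fin i), stage d S y ∈ 𝔰 ∧ S.card = 2 := by
    intro y
    obtain ⟨s, hs1, hys⟩ := hs.covers y
    obtain ⟨S, x, rfl, hS⟩ := h2 s hs1
    exact ⟨S, stage_eq_of_mem hys ▸ hs1, hS⟩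
  choose g hg hcard using key
  have uniq : ∀ s ∈ 𝔰, ∀ y ∈ s, s = stage d (g y) y := by
    intro s hs1 y hy
    by_contra hne
    exact Set.disjoint_left.1 (hs.pairwiseDisjoint _ hs1 _ (hg y) hne) hy (mem_stage_self _ _)
  refine ⟨g, ⟨fun x y hxy => (stage_inj hd (uniq _ (hg y) x hxy)).symm, hcard⟩, ?_⟩
  ext s
  constructor
  · rintro ⟨x, rfl⟩
    exact hg x
  · intro hs1
    obtain ⟨y, hy⟩ := hs.nonempty s hs1
    exact ⟨y, (uniq s hs1 y hy).symm⟩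

/-- Distinct stages are separated by a common context variable; otherwise gluing the two
contexts together would give a point lying in both stages. -/
lemma IsContext.sep {g : (∀ k : Fin i, Fin (d k)) → Finset (Fin i)} (hg : IsContext g)
    {x y : ∀ k : Fin i, Fin (d k)} (hne : g x ≠ g y) :
    ∃ m, m ∈ g x ∧ m ∈ g y ∧ x m ≠ y m := by
  by_contra! h
  let z : ∀ k : Fin i, Fin (d k) := fun k => if k ∈ g x then x k else y k
  have hzx : g z = g x := hg.consistent _ _ fun k hk => by simp [z, hk]
  have hzy : g z = g y := hg.consistent _ _ fun k hk => by
    by_cases hkx : k ∈ g x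
    · simpa [z, hkx] using h k hkx hk
    · simp [z, hkx]
  exact hne (hzx.symm.trans hzy)

lemma eq_pair {S : Finset (Fin i)} (hS : S.card = 2) {a b : Fin i} (ha : a ∈ S) (hb : b ∈ S)
    (hab : a ≠ b) : S = {a, b} := by
  symm
  apply Finset.eq_of_subset_of_card_le
  · intro m; simp only [Finset.mem_insert, Finset.mem_singleton]; rintro (rfl | rfl) <;> assumption
  · rw [hS, Finset.card_pair hab]

/-- There is no triangle: a variable common to two distinct context sets is common to all. -/
lemma IsContext.mem_of_ne {g : (∀ k : Fin i, Fin (d k)) → Finset (Fin i)} (hg : IsContext g)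
    {x y : ∀ k : Fin i, Fin (d k)} (hne : g x ≠ g y) {k : Fin i} (hkx : k ∈ g x)
    (hky : k ∈ g y) (z : ∀ k : Fin i, Fin (d k)) : k ∈ g z := by
  by_contra hkz
  obtain ⟨a, haz, hax, haa⟩ := hg.sep (x := z) (y := x) (fun e => hkz (e ▸ hkx))
  obtain ⟨b, hbz, hby, hbb⟩ := hg.sep (x := z) (y := y) (fun e => hkz (e ▸ hky))
  have hka : k ≠ a := fun e => hkz (e ▸ haz)
  have hkb : k ≠ b := fun e => hkz (e ▸ hbz)
  have ex : g x = {k, a} := eq_pair (hg.card x) hkx hax hka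
  have ey : g y = {k, b} := eq_pair (hg.card y) hky hby hkb
  have hab : a ≠ b := fun e => hne (by rw [ex, ey, e])
  have ez : g z = {a, b} := eq_pair (hg.card z) haz hbz hab
  -- `w` agrees with each of the three stages in exactly one of that stage's two context variables.
  let w : ∀ k : Fin i, Fin (d k) := fun m => if m = k then x m else if m = a then z m else y m
  have wk : w k = x k := by simp [w]
  have wa : w a = z a := by simp [w, hka.symm]
  have wb : w b = y b := by simp [w, hkb.symm, hab.symm]
  have a_mem : a ∈ g w := by
    by_cases e : g w = g x
    · rw [e]; exact hax
    obtain ⟨m, hmw, hm, hh⟩ := hg.sep e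
    rw [ex, Finset.mem_insert, Finset.mem_singleton] at hm
    rcases hm with rfl | rfl
    · exact absurd wk hh
    · exact hmw
  have k_mem : k ∈ g w := by
    by_cases e : g w = g y
    · rw [e]; exact hky
    obtain ⟨m, hmw, hm, hh⟩ := hg.sep e
    rw [ey, Finset.mem_insert, Finset.mem_singleton] at hm
    rcases hm with rfl | rfl
    · exact hmw
    · exact absurd wb hh
  have b_mem : b ∈ g w := by
    by_cases e : g w = g z
    · rw [e]; exact hbz
    obtain ⟨m, hmw, hm, hh⟩ := hg.sep e
    rw [ez, Finset.mem_insert, Finset.mem_singleton] at hm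
    rcases hm with rfl | rfl
    · exact absurd wa hh
    · exact hmw
  rw [eq_pair (hg.card w) k_mem a_mem hka, Finset.mem_insert, Finset.mem_singleton] at b_mem
  rcases b_mem with e | e
  · exact hkb e.symm
  · exact hab e.symm

/-- Parameters for the two-variable stagings: either one pair of context variables for all stages,
or a variable `k` with a nonconstant choice of second variable depending on the value at `k`. -/
abbrev Param (d : Fin i → ℕ) : Type :=
  {S : Finset (Fin i) // S.card = 2} ⊕
    (Σ k : Fin i, {f : Fin (d k) → {j : Fin i // j ≠ k} //
      f ∉ Set.range (Function.const (Fin (d k)))})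

/-- The context function with given parameters. -/
def contextOf : Param d → (∀ k : Fin i, Fin (d k)) → Finset (Fin i)
  | .inl S => fun _ => S.1
  | .inr ⟨k, f⟩ => fun x => {k, (f.1 (x k)).1}

lemma contextOf_isContext (p : Param d) : IsContext (contextOf p) := by
  rcases p with ⟨S, hS⟩ | ⟨k, f, hf⟩
  · exact ⟨fun _ _ _ => rfl, fun _ => hS⟩
  · refine ⟨fun x y hxy => ?_, fun x => Finset.card_pair (f (x k)).2.symm⟩
    have : x k = y k := hxy k (by simp [contextOf])
    simp [contextOf, this]

/-- With all `d m` positive, every value of the coordinate `k` is attained. -/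
lemma exists_coord_eq (hd : ∀ m, 2 ≤ d m) (k : Fin i) (v : Fin (d k)) :
    ∃ x : ∀ k : Fin i, Fin (d k), x k = v :=
  ⟨Function.update (fun m => ⟨0, by have := hd m; omega⟩) k v, Function.update_self ..⟩

lemma const_of_mem (hd : ∀ m, 2 ≤ d m) {k j : Fin i} (hjk : j ≠ k)
    {f : Fin (d k) → {j : Fin i // j ≠ k}}
    (h : ∀ x : ∀ k : Fin i, Fin (d k), j ∈ ({k, (f (x k)).1} : Finset (Fin i))) :
    f ∈ Set.range (Function.const (Fin (d k))) := by
  refine ⟨⟨j, hjk⟩, funext fun v => Subtype.ext ?_⟩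
  obtain ⟨x, rfl⟩ := exists_coord_eq hd k v
  have := h x
  rw [Finset.mem_insert, Finset.mem_singleton] at this
  exact this.resolve_left hjk

lemma const_ne_contextOf (hd : ∀ m, 2 ≤ d m) {S : Finset (Fin i)} (hS : S.card = 2) {k : Fin i}
    {f : Fin (d k) → {j : Fin i // j ≠ k}}
    (h : ∀ x : ∀ k : Fin i, Fin (d k), S = {k, (f (x k)).1}) :
    f ∈ Set.range (Function.const (Fin (d k))) := by
  obtain ⟨j, hj, hjk⟩ := Finset.exists_mem_ne (by omega : 1 < S.card) k
  exact const_of_mem hd hjk fun x => h x ▸ hj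

lemma contextOf_injective (hd : ∀ m, 2 ≤ d m) : Function.Injective (contextOf (d := d)) := by
  rintro (⟨S, hS⟩ | ⟨k, f, hf⟩) (⟨T, hT⟩ | ⟨k', f', hf'⟩) h
  · have := congrFun h fun m => ⟨0, by have := hd m; omega⟩
    simp only [contextOf] at this
    subst this; rfl
  · exact absurd (const_ne_contextOf hd hS fun x => congrFun h x) hf'
  · exact absurd (const_ne_contextOf hd hT fun x => (congrFun h x).symm) hf
  · have hx : ∀ x : ∀ k : Fin i, Fin (d k),
        ({k, (f (x k)).1} : Finset (Fin i)) = {k', (f' (x k')).1} := fun x => congrFun h x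
    have hk : k' = k := by
      by_contra hne
      exact hf (const_of_mem hd hne fun x => by rw [hx]; simp)
    subst hk
    have : f = f' := by
      funext v
      obtain ⟨x, rfl⟩ := exists_coord_eq hd k' v
      have h1 : (f (x k')).1 ∈ ({k', (f' (x k')).1} : Finset (Fin i)) := by rw [← hx]; simp
      rw [Finset.mem_insert, Finset.mem_singleton] at h1
      exact Subtype.ext (h1.resolve_left (f (x k')).2)
    subst this; rfl

lemma contextOf_surjective (hd : ∀ m, 2 ≤ d m)
    {g : (∀ k : Fin i, Fin (d k)) → Finset (Fin i)} (hg : IsContext g) :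
    ∃ p, contextOf p = g := by
  by_cases hc : ∀ x y, g x = g y
  · let x₀ : ∀ k : Fin i, Fin (d k) := fun m => ⟨0, by have := hd m; omega⟩
    exact ⟨.inl ⟨g x₀, hg.card x₀⟩, funext fun x => hc x₀ x⟩
  push Not at hc
  obtain ⟨x, y, hne⟩ := hc
  obtain ⟨k, hkx, hky, -⟩ := hg.sep hne
  have hk := hg.mem_of_ne hne hkx hky
  have hdep : ∀ z z', z k = z' k → g z = g z' := by
    intro z z' e
    by_contra hzz
    obtain ⟨m, hm, hm', hmm⟩ := hg.sep hzz
    have hkm : k ≠ m := by rintro rfl; exact hmm e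
    exact hzz ((eq_pair (hg.card z) (hk z) hm hkm).trans
      (eq_pair (hg.card z') (hk z') hm' hkm).symm)
  choose r hr using exists_coord_eq hd k
  have hj : ∀ v, ∃ j : {j : Fin i // j ≠ k}, j.1 ∈ g (r v) := fun v => by
    obtain ⟨j, hj, hjk⟩ := Finset.exists_mem_ne (by rw [hg.card]; omega : 1 < (g (r v)).card) k
    exact ⟨⟨j, hjk⟩, hj⟩
  choose f hf using hj
  have hgf : ∀ z, g z = {k, (f (z k)).1} := fun z => by
    rw [hdep z (r (z k)) (hr _).symm]
    exact eq_pair (hg.card _) (hk _) (hf _) (f (z k)).2.symm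
  refine ⟨.inr ⟨k, f, ?_⟩, funext fun z => (hgf z).symm⟩
  rintro ⟨c, rfl⟩
  exact hne ((hgf x).trans (hgf y).symm)

lemma card_nonconst (hd : ∀ m, 2 ≤ d m) (k : Fin i) :
    Nat.card {f : Fin (d k) → {j : Fin i // j ≠ k} // f ∉ Set.range (Function.const (Fin (d k)))}
      = (i - 1) ^ d k - (i - 1) := by
  classical
  have : Nonempty (Fin (d k)) := ⟨⟨0, by have := hd k; omega⟩⟩
  have h1 : Fintype.card {j : Fin i // j ≠ k} = i - 1 := by
    simp
  rw [Nat.card_eq_fintype_card, Fintype.card_subtype_compl, Fintype.card_fun, h1, Fintype.card_fin]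
  congr 1
  rw [← h1]
  exact Set.card_range_of_injective Function.const_injective

/-- The number of stagings of the level in which every stage has exactly two context variables
equals `C(i,2) + ∑_{k=1}^{i} ((i-1)^{d_k} - (i-1))`. -/
theorem card_stagings_two_context_variables
    (i : ℕ) (hi : 2 ≤ i) (d : Fin i → ℕ) (hd : ∀ m, 2 ≤ d m) :
    Nat.card {𝔰 : Set (Set (∀ k : Fin i, Fin (d k))) //
        IsStaging d 𝔰 ∧ ∀ s ∈ 𝔰, ∃ S x, s = stage d S x ∧ S.card = 2}
      = i.choose 2 + ∑ k : Fin i, ((i - 1) ^ d k - (i - 1)) := by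
  let F : Param d → {𝔰 : Set (Set (∀ k : Fin i, Fin (d k))) //
        IsStaging d 𝔰 ∧ ∀ s ∈ 𝔰, ∃ S x, s = stage d S x ∧ S.card = 2} := fun p =>
    ⟨ofContext (contextOf p), (contextOf_isContext p).isStaging, by
      rintro _ ⟨x, rfl⟩
      exact ⟨_, _, rfl, (contextOf_isContext p).card x⟩⟩
  have hF : Function.Bijective F := by
    constructor
    · intro p q h
      exact contextOf_injective hd
        (ofContext_injective hd (contextOf_isContext q) (congrArg Subtype.val h))
    · rintro ⟨𝔰, hs, h2⟩
      obtain ⟨g, hg, rfl⟩ := exists_ofContext_eq hd hs h2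
      obtain ⟨p, rfl⟩ := contextOf_surjective hd hg
      exact ⟨p, rfl⟩
  rw [← Nat.card_eq_of_bijective F hF, Nat.card_sum, Nat.card_sigma]
  congr 1
  · rw [Nat.card_eq_fintype_card, Fintype.card_finset_len, Fintype.card_fin]
  · exact Finset.sum_congr rfl fun k _ => card_nonconst hd k
end

section
/- For every integer $d \ge 1$, the number of partitions of the set $\{0,1\}^d$ into pairwise disjoint subcubes (faces) each of dimension at least $d-2$ — equivalently, into sets of the form $\{y \in \{0,1\}^d : y_k = x_k \text{ for all } k \in S\}$ with $S \subseteq \{1,\dots,d\}$, $|S| \le 2$ — equals $1 - \binom{d}{2} + d^3$. -/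
/-!
Call a code a triple `(i, u 0, u 1)` of coordinates, and attach to it the partition of the cube whose
block through `q` is the face obtained by fixing the coordinates `i` and `u (q i)`: first split along
`i`, then split the half `x i = a` along `u a`, with `u a = i` meaning that this half stays whole.

* Every admissible partition other than the one-block partition comes from a code
  (`IsLargeStaging.exists_code`). The key point (`IsLargeStaging.exists_common_coordinate`) is that
  all blocks fix a common coordinate `i`. Otherwise disjointness forces three blocks
  `{x i = a, x j = b}`, `{x j = ¬b, x k = ¬c}`, `{x i = ¬a, x k = c}`, and then a block through a
  point with `x i = a`, `x j = ¬b`, `x k = c` would have to fix all of `i`, `j`, `k`. Given `i`,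
  disjointness also forces all blocks inside one half `x i = a` to fix the same coordinates.
* Two distinct codes give the same partition exactly when they are `(i, j, j)` and `(j, i, i)`
  with `i ≠ j` (`code_eq_or_swap`, `codePartition_swap`).

Hence the `d ^ 3` codes produce `d ^ 3 - d.choose 2` partitions, and the one-block partition is the
last one.
-/

open Finset

/-- The face of the cube through `q` fixing the coordinates in `S`. -/
abbrev face {d : ℕ} (S : Finset (Fin d)) (q : Fin d → Fin 2) : Set (Fin d → Fin 2) :=
  stage (fun _ => 2) S q

/-- The partition attached to the code `(i, u)`: its block through `q` fixes the coordinates `i` and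
`u (q i)`, so that the half `x i = a` is left whole when `u a = i`. -/
def codePartition {d : ℕ} (c : Fin d × (Fin 2 → Fin d)) : Set (Set (Fin d → Fin 2)) :=
  Set.range fun q : Fin d → Fin 2 => face {c.1, c.2 (q c.1)} q

/-- The partitions being counted: stagings of the cube by faces of codimension at most two. -/
abbrev IsLargeStaging {d : ℕ} (P : Set (Set (Fin d → Fin 2))) : Prop :=
  IsStaging (fun _ => 2) P ∧ ∀ s ∈ P, ∃ S x, s = stage (fun _ => 2) S x ∧ S.card ≤ 2

theorem mem_face {d : ℕ} {S : Finset (Fin d)} {q y : Fin d → Fin 2} :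
    y ∈ face S q ↔ ∀ k ∈ S, y k = q k := Iff.rfl

theorem self_mem_face {d : ℕ} (S : Finset (Fin d)) (q : Fin d → Fin 2) : q ∈ face S q :=
  fun _ _ => rfl

theorem face_eq_of_mem {d : ℕ} {S : Finset (Fin d)} {q y : Fin d → Fin 2} (h : y ∈ face S q) :
    face S y = face S q := by
  ext z
  exact forall₂_congr fun k hk => by rw [h k hk]

/-- A face determines the set of coordinates it fixes. -/
theorem face_coords_subset {d : ℕ} {S T : Finset (Fin d)} {q : Fin d → Fin 2}
    (h : face S q ⊆ face T q) : T ⊆ S := by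
  intro k hk
  by_contra hkS
  -- Flipping the coordinate `k` of `q` stays inside `face S q` but leaves `face T q`.
  have h1 : Function.update q k (1 - q k) ∈ face S q := by
    intro l hl
    have : l ≠ k := by rintro rfl; exact hkS hl
    simp [this]
  have h2 := h h1 k hk
  simp only [Function.update_self] at h2
  revert h2
  generalize q k = a
  revert a
  decide

/-- Disjoint faces take different values at some coordinate fixed by both: otherwise the point
following `p` on `S` and `q` off `S` would lie in both. -/
theorem exists_conflict {d : ℕ} {S T : Finset (Fin d)} {p q : Fin d → Fin 2}
    (h : Disjoint (face S p) (face T q)) : ∃ k, k ∈ S ∧ k ∈ T ∧ p k ≠ q k := by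
  by_contra! hc
  have hd : ∀ y ∈ face S p, y ∉ face T q := fun _ hy => Set.disjoint_left.1 h hy
  refine hd (fun k => if k ∈ S then p k else q k) ?_ ?_
  · intro k hk
    simp [hk]
  · intro k hk
    by_cases hS : k ∈ S
    · simpa [hS] using hc k hS hk
    · simp [hS]

theorem IsStaging.eq_of_mem {d : ℕ} {P : Set (Set (Fin d → Fin 2))}
    (hP : IsStaging (fun _ => 2) P) {s t : Set (Fin d → Fin 2)} (hs : s ∈ P) (ht : t ∈ P)
    {q : Fin d → Fin 2} (hqs : q ∈ s) (hqt : q ∈ t) : s = t := by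
  by_contra hne
  exact Set.disjoint_left.1 (hP.pairwiseDisjoint s hs t ht hne) hqs hqt

/-- A partition is recovered from the function sending each point to its block. -/
theorem IsStaging.eq_range {d : ℕ} {P : Set (Set (Fin d → Fin 2))}
    (hP : IsStaging (fun _ => 2) P) {F : (Fin d → Fin 2) → Set (Fin d → Fin 2)}
    (hF : ∀ q, F q ∈ P) (hmem : ∀ q, q ∈ F q) : P = Set.range F := by
  ext s
  constructor
  · intro hs
    obtain ⟨q, hq⟩ := hP.nonempty s hs
    exact ⟨q, hP.eq_of_mem (hF q) hs (hmem q) hq⟩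
  · rintro ⟨q, rfl⟩
    exact hF q

/-- Through each point passes a block, which is a face fixing at most two coordinates. -/
theorem IsLargeStaging.exists_face {d : ℕ} {P : Set (Set (Fin d → Fin 2))}
    (hP : IsLargeStaging P) (q : Fin d → Fin 2) :
    ∃ S : Finset (Fin d), S.card ≤ 2 ∧ face S q ∈ P := by
  obtain ⟨s, hs, hq⟩ := hP.1.covers q
  obtain ⟨S, x, rfl, hS⟩ := hP.2 s hs
  refine ⟨S, hS, ?_⟩
  rw [face_eq_of_mem hq]
  exact hs

theorem singleton_univ_isLargeStaging {d : ℕ} :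
    IsLargeStaging ({Set.univ} : Set (Set (Fin d → Fin 2))) := by
  have h : (Set.univ : Set (Fin d → Fin 2)) = face ∅ 0 := by
    ext y
    simp [mem_face]
  refine ⟨⟨?_, ?_, ?_, ?_⟩, ?_⟩
  · rintro s rfl
    exact ⟨∅, 0, h⟩
  · rintro s rfl
    exact Set.univ_nonempty
  · rintro s rfl t rfl hne
    exact absurd rfl hne
  · exact fun y => ⟨_, rfl, trivial⟩
  · rintro s rfl
    exact ⟨∅, 0, h, by simp⟩

theorem codePartition_isLargeStaging {d : ℕ} (c : Fin d × (Fin 2 → Fin d)) :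
    IsLargeStaging (codePartition c) := by
  refine ⟨⟨?_, ?_, ?_, ?_⟩, ?_⟩
  · rintro s ⟨q, rfl⟩
    exact ⟨_, q, rfl⟩
  · rintro s ⟨q, rfl⟩
    exact ⟨q, self_mem_face _ q⟩
  · rintro s ⟨p, rfl⟩ t ⟨q, rfl⟩ hne
    refine Set.disjoint_left.2 fun y hp hq => hne ?_
    have hpi : y c.1 = p c.1 := hp _ (by simp)
    have hqi : y c.1 = q c.1 := hq _ (by simp)
    have e1 := face_eq_of_mem hp
    have e2 := face_eq_of_mem hq
    rw [← hpi] at e1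
    rw [← hqi] at e2
    simp only [← hpi, ← hqi]
    exact e1.symm.trans e2
  · exact fun y => ⟨_, ⟨y, rfl⟩, self_mem_face _ y⟩
  · rintro s ⟨q, rfl⟩
    exact ⟨_, q, rfl, card_le_two⟩

theorem codePartition_ne_singleton_univ {d : ℕ} (c : Fin d × (Fin 2 → Fin d)) :
    codePartition c ≠ {Set.univ} := by
  intro h
  have h0 : face {c.1, c.2 0} (0 : Fin d → Fin 2) ∈ codePartition c := ⟨0, rfl⟩
  rw [h, Set.mem_singleton_iff] at h0
  have h1 : (1 : Fin d → Fin 2) ∈ face {c.1, c.2 0} (0 : Fin d → Fin 2) := by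
    rw [h0]
    trivial
  exact absurd (h1 c.1 (by simp)) (by simp)

/-- Blocks that differ, either as sets of fixed coordinates or because the second misses the
representative of the first, conflict at a coordinate fixed by both. -/
theorem IsLargeStaging.conflict {d : ℕ} {P : Set (Set (Fin d → Fin 2))}
    (hP : IsLargeStaging P) {S T : Finset (Fin d)} {p q : Fin d → Fin 2}
    (hS : face S p ∈ P) (hT : face T q ∈ P) (h : ¬ S ⊆ T ∨ p ∉ face T q) :
    ∃ l, l ∈ S ∧ l ∈ T ∧ p l ≠ q l := by
  refine exists_conflict (hP.1.pairwiseDisjoint _ hS _ hT fun he => ?_)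
  have hpT : p ∈ face T q := he ▸ self_mem_face S p
  rcases h with h | h
  · rw [← face_eq_of_mem hpT] at he
    exact h (face_coords_subset he.ge)
  · exact h hpT

theorem eq_pair_of_card_le_two {d : ℕ} {S : Finset (Fin d)} {i j : Fin d} (hS : S.card ≤ 2)
    (hi : i ∈ S) (hj : j ∈ S) (hij : i ≠ j) : S = {i, j} := by
  refine (Finset.eq_of_subset_of_card_le ?_ ?_).symm
  · intro k hk
    rcases Finset.mem_insert.1 hk with rfl | hk
    · exact hi
    · rwa [Finset.mem_singleton.1 hk]
  · rwa [Finset.card_pair hij]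

/-- All blocks of a partition with more than one block fix a common coordinate. -/
theorem IsLargeStaging.exists_common_coordinate {d : ℕ} {P : Set (Set (Fin d → Fin 2))}
    (hP : IsLargeStaging P) (hne : P ≠ {Set.univ}) :
    ∃ i, ∀ (S : Finset (Fin d)) (q : Fin d → Fin 2), S.card ≤ 2 → face S q ∈ P → i ∈ S := by
  obtain ⟨S₀, hc₀, hS₀⟩ := hP.exists_face 0
  generalize (0 : Fin d → Fin 2) = q₀ at hS₀
  have hS₀ne : S₀.Nonempty := by
    rw [Finset.nonempty_iff_ne_empty]
    rintro rfl
    have hu : face (∅ : Finset (Fin d)) q₀ = Set.univ := by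
      ext y
      simp [mem_face]
    rw [hu] at hS₀
    exact hne ((hP.1.eq_range (fun _ => hS₀) fun _ => trivial).trans Set.range_const)
  obtain ⟨i, hi₀⟩ := hS₀ne
  by_contra! hcon
  -- Three blocks fixing `{i, j}`, `{j, k}` and `{i, k}` respectively.
  obtain ⟨S₁, q₁, hc₁, hS₁, hi₁⟩ := hcon i
  obtain ⟨j, hj₀, hj₁, hj⟩ := hP.conflict hS₀ hS₁ (.inl fun h => hi₁ (h hi₀))
  have hij : i ≠ j := fun h => hi₁ (h ▸ hj₁)
  obtain rfl := eq_pair_of_card_le_two hc₀ hi₀ hj₀ hij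
  obtain ⟨S₂, q₂, hc₂, hS₂, hj₂⟩ := hcon j
  obtain ⟨l, hl₀, hl₂, hl⟩ := hP.conflict hS₀ hS₂ (.inl fun h => hj₂ (h hj₀))
  have hli : l = i := by
    rcases Finset.mem_insert.1 hl₀ with h | h
    · exact h
    · exact absurd (Finset.mem_singleton.1 h ▸ hl₂) hj₂
  subst l
  obtain ⟨k, hk₁, hk₂, hk⟩ := hP.conflict hS₁ hS₂ (.inl fun h => hj₂ (h hj₁))
  have hik : i ≠ k := fun h => hi₁ (h ▸ hk₁)
  have hjk : j ≠ k := fun h => hj₂ (h ▸ hk₂)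
  obtain rfl := eq_pair_of_card_le_two hc₁ hj₁ hk₁ hjk
  obtain rfl := eq_pair_of_card_le_two hc₂ hl₂ hk₂ hik
  -- The block through `p` meets none of the three, and each of them forces one more coordinate.
  obtain ⟨p, hpi, hpj, hpk⟩ : ∃ p : Fin d → Fin 2, p i = q₀ i ∧ p j = q₁ j ∧ p k = q₂ k :=
    ⟨fun l => if l = i then q₀ i else if l = j then q₁ j else q₂ k, by simp, by simp [hij.symm],
      by simp [hik.symm, hjk.symm]⟩
  obtain ⟨S, hc, hS⟩ := hP.exists_face p
  have hjS : j ∈ S := by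
    obtain ⟨l, hlS, hl', hne'⟩ := hP.conflict hS hS₀
      (.inr fun h => hj ((h j (by simp)).symm.trans hpj))
    rcases Finset.mem_insert.1 hl' with rfl | h
    · exact absurd hpi hne'
    · rwa [← Finset.mem_singleton.1 h]
  have hkS : k ∈ S := by
    obtain ⟨l, hlS, hl', hne'⟩ := hP.conflict hS hS₁
      (.inr fun h => hk ((h k (by simp)).symm.trans hpk))
    rcases Finset.mem_insert.1 hl' with rfl | h
    · exact absurd hpj hne'
    · rwa [← Finset.mem_singleton.1 h]
  have hiS : i ∈ S := by
    obtain ⟨l, hlS, hl', hne'⟩ := hP.conflict hS hS₂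
      (.inr fun h => hl (hpi.symm.trans (h i (by simp))))
    rcases Finset.mem_insert.1 hl' with rfl | h
    · exact hlS
    · rw [Finset.mem_singleton.1 h] at hne'
      exact absurd hpk hne'
  rw [eq_pair_of_card_le_two hc hiS hjS hij] at hkS
  simp [hik.symm, hjk.symm] at hkS

theorem IsLargeStaging.exists_code {d : ℕ} {P : Set (Set (Fin d → Fin 2))}
    (hP : IsLargeStaging P) (hne : P ≠ {Set.univ}) : ∃ c, codePartition c = P := by
  obtain ⟨i, hi⟩ := hP.exists_common_coordinate hne
  have hpair : ∀ S : Finset (Fin d), S.card ≤ 2 → i ∈ S → ∃ v, S = {i, v} := by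
    intro S hc hiS
    by_cases h : ∃ v ∈ S, i ≠ v
    · obtain ⟨v, hv, hiv⟩ := h
      exact ⟨v, eq_pair_of_card_le_two hc hiS hv hiv⟩
    · push Not at h
      refine ⟨i, ?_⟩
      rw [Finset.pair_eq_singleton]
      exact Finset.eq_singleton_iff_unique_mem.2 ⟨hiS, fun v hv => (h v hv).symm⟩
  -- On the half `x i = a`, all blocks fix the same coordinates.
  have key : ∀ a : Fin 2, ∃ v, ∀ q : Fin d → Fin 2, q i = a → face {i, v} q ∈ P := by
    intro a
    obtain ⟨S, hc, hS⟩ := hP.exists_face fun _ => a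
    obtain ⟨v, rfl⟩ := hpair S hc (hi S _ hc hS)
    refine ⟨v, fun q hq => ?_⟩
    by_cases hqS : q ∈ face {i, v} fun _ => a
    · rwa [face_eq_of_mem hqS]
    obtain ⟨T, hcT, hT⟩ := hP.exists_face q
    obtain ⟨l, hlT, hlS, hl⟩ := hP.conflict hT hS (.inr hqS)
    have hil : i ≠ l := by
      rintro rfl
      exact hl hq
    have hlv : l = v := by
      rcases Finset.mem_insert.1 hlS with h | h
      · exact absurd h.symm hil
      · exact Finset.mem_singleton.1 h
    rwa [← hlv, ← eq_pair_of_card_le_two hcT (hi T q hcT hT) hlT hil]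
  choose u hu using key
  exact ⟨(i, u), (hP.1.eq_range (fun q => hu (q i) q rfl) fun q => self_mem_face _ q).symm⟩

/-- Codes of the same partition have, at each point, blocks fixing the same coordinates. -/
theorem code_pair_eq {d : ℕ} {c c' : Fin d × (Fin 2 → Fin d)}
    (h : codePartition c = codePartition c') (q : Fin d → Fin 2) :
    ({c.1, c.2 (q c.1)} : Finset (Fin d)) = {c'.1, c'.2 (q c'.1)} := by
  have h1 : face {c.1, c.2 (q c.1)} q ∈ codePartition c' := h ▸ ⟨q, rfl⟩
  have h2 : face {c'.1, c'.2 (q c'.1)} q ∈ codePartition c' := ⟨q, rfl⟩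
  have h3 := (codePartition_isLargeStaging c').1.eq_of_mem h1 h2
    (self_mem_face _ q) (self_mem_face _ q)
  exact Finset.Subset.antisymm (face_coords_subset h3.ge) (face_coords_subset h3.le)

theorem code_eq_or_swap {d : ℕ} {c c' : Fin d × (Fin 2 → Fin d)}
    (h : codePartition c = codePartition c') :
    c = c' ∨ (c.1 ≠ c'.1 ∧ (∀ a, c.2 a = c'.1) ∧ ∀ a, c'.2 a = c.1) := by
  obtain ⟨i, u⟩ := c
  obtain ⟨i', u'⟩ := c'
  by_cases hi : i = i'
  · subst i'
    left
    congr 1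
    funext a
    have h1 := code_pair_eq h fun _ => a
    simp only at h1
    have h2 : u a ∈ ({i, u' a} : Finset (Fin d)) := h1 ▸ by simp
    have h3 : u' a ∈ ({i, u a} : Finset (Fin d)) := h1 ▸ by simp
    simp only [Finset.mem_insert, Finset.mem_singleton] at h2 h3
    grind
  · right
    refine ⟨hi, fun a => ?_, fun a => ?_⟩
    · have h1 := code_pair_eq h fun _ => a
      have h2 : i' ∈ ({i, u a} : Finset (Fin d)) := h1 ▸ by simp
      simp only [Finset.mem_insert, Finset.mem_singleton] at h2
      grind
    · have h1 := code_pair_eq h fun _ => a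
      have h2 : i ∈ ({i', u' a} : Finset (Fin d)) := h1 ▸ by simp
      simp only [Finset.mem_insert, Finset.mem_singleton] at h2
      grind

theorem codePartition_swap {d : ℕ} (i j : Fin d) :
    codePartition (i, fun _ => j) = codePartition (j, fun _ => i) := by
  simp only [codePartition, Finset.pair_comm]

/-- The codes `(i, j, j)` with `j < i`, redundant because `(j, i, i)` gives the same partition. -/
def redundantCodes (d : ℕ) : Finset (Fin d × (Fin 2 → Fin d)) :=
  {c | c.2 0 = c.2 1 ∧ c.2 0 < c.1}

theorem mem_redundantCodes {d : ℕ} {c : Fin d × (Fin 2 → Fin d)} :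
    c ∈ redundantCodes d ↔ c.2 0 = c.2 1 ∧ c.2 0 < c.1 := by
  simp [redundantCodes]

theorem card_redundantCodes (d : ℕ) : (redundantCodes d).card = d.choose 2 := by
  have h : (redundantCodes d).card =
      ((univ : Finset (Fin d)).sigma fun i => Finset.Iio i).card := by
    refine Finset.card_bij' (fun c _ => ⟨c.1, c.2 0⟩) (fun x _ => (x.1, fun _ => x.2)) ?_ ?_ ?_ ?_
    · intro c hc
      simpa using (mem_redundantCodes.1 hc).2
    · intro x hx
      exact mem_redundantCodes.2 ⟨rfl, by simpa using hx⟩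
    · rintro ⟨i, u⟩ hc
      have h01 := (mem_redundantCodes.1 hc).1
      simp only [Prod.mk.injEq, true_and]
      funext a
      fin_cases a
      · rfl
      · exact h01
    · intro x _
      rfl
  rw [h, Finset.card_sigma]
  simp only [Fin.card_Iio]
  rw [Fin.sum_univ_eq_sum_range (fun n => n), Finset.sum_range_id, Nat.choose_two_right]

theorem injOn_codePartition (d : ℕ) :
    Set.InjOn codePartition (↑(redundantCodes d)ᶜ : Set (Fin d × (Fin 2 → Fin d))) := by
  intro c hc c' hc' h
  simp only [Finset.coe_compl, Set.mem_compl_iff, Finset.mem_coe, mem_redundantCodes] at hc hc'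
  rcases code_eq_or_swap h with h | ⟨hne, h1, h2⟩
  · exact h
  · rw [h1, h1] at hc
    rw [h2, h2] at hc'
    simp only [true_and, not_lt] at hc hc'
    exact absurd (le_antisymm hc hc') hne

theorem setOf_isLargeStaging (d : ℕ) :
    {P : Set (Set (Fin d → Fin 2)) | IsLargeStaging P} =
      insert {Set.univ} (codePartition '' ↑(redundantCodes d)ᶜ) := by
  ext P
  constructor
  · intro hP
    by_cases hne : P = {Set.univ}
    · exact .inl hne
    right
    obtain ⟨⟨i, u⟩, rfl⟩ := IsLargeStaging.exists_code hP hne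
    by_cases hc : (i, u) ∈ redundantCodes d
    · obtain ⟨h01, hlt⟩ := mem_redundantCodes.1 hc
      have hu : u = fun _ => u 0 := by
        funext a
        fin_cases a
        · rfl
        · exact h01.symm
      refine ⟨(u 0, fun _ => i), ?_, ?_⟩
      · simp only [Finset.coe_compl, Set.mem_compl_iff, Finset.mem_coe, mem_redundantCodes]
        exact fun h => lt_asymm hlt h.2
      · rw [codePartition_swap, ← hu]
    · exact ⟨_, by simpa using hc, rfl⟩
  · rintro (rfl | ⟨c, -, rfl⟩)
    · exact singleton_univ_isLargeStaging
    · exact codePartition_isLargeStaging c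

/-- The number of partitions of the discrete cube `{0,1}^d` into pairwise disjoint faces each of
dimension at least `d - 2` — i.e. faces `{y : y_k = x_k for all k ∈ S}` with `|S| ≤ 2` —
equals `1 - C(d,2) + d^3`. -/
theorem card_cube_partitions_into_large_faces (d : ℕ) (hd : 1 ≤ d) :
    (Nat.card {𝔰 : Set (Set (∀ _ : Fin d, Fin 2)) //
        IsStaging (fun _ => 2) 𝔰 ∧
        ∀ s ∈ 𝔰, ∃ S x, s = stage (fun _ => 2) S x ∧ S.card ≤ 2} : ℤ)
      = 1 - (d.choose 2 : ℤ) + (d : ℤ) ^ 3 := by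
  have hcard : Nat.card {𝔰 : Set (Set (∀ _ : Fin d, Fin 2)) //
      IsStaging (fun _ => 2) 𝔰 ∧
      ∀ s ∈ 𝔰, ∃ S x, s = stage (fun _ => 2) S x ∧ S.card ≤ 2} = ((redundantCodes d)ᶜ).card + 1 := by
    change Set.ncard {P : Set (Set (Fin d → Fin 2)) | IsLargeStaging P} = _
    rw [setOf_isLargeStaging, Set.ncard_insert_of_notMem, (injOn_codePartition d).ncard_image,
      Set.ncard_coe_finset]
    rintro ⟨c, -, hc⟩
    exact codePartition_ne_singleton_univ c hc
  have htot := Finset.card_add_card_compl (redundantCodes d)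
  rw [card_redundantCodes] at htot
  simp only [Fintype.card_prod, Fintype.card_fun, Fintype.card_fin] at htot
  rw [hcard]
  zify at htot
  push_cast
  linarith
end

section
/- Fix an integer $i \ge 2$ and integers $d_1,\dots,d_i \ge 2$, and let $d_{(i)} \ge d_{(i-1)}$ denote the largest and second largest values among $d_1,\dots,d_i$ (order statistics). Then the maximum, over all stagings of $\mathcal{X}_{[i]}$ in which every stage has at most two context variables, of the number of stages in the staging equals $d_{(i-1)} \cdot d_{(i)}$: every such staging has at most $d_{(i-1)} d_{(i)}$ stages, and some such staging attains this bound. -/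
/-!
The upper bound is a volume count. A stage with context set `S` contains
`∏ k, d k / ∏ k ∈ S, d k` of the `∏ k, d k` points of the level (`card_stage_mul_prod`). If `S` has
at most two elements then `∏ k ∈ S, d k ≤ d a * d b` (`prod_le_of_card_le_two`), so such a stage
occupies at least the fraction `1 / (d a * d b)` of the level, and at most `d a * d b` of them are
pairwise disjoint. The bound is attained by the staging all of whose stages have context set
`{a, b}`, i.e. by the fibres of `y ↦ (y a, y b)`.
-/

open Finset

open Classical in
/-- A stage is a box: its side is a single point in the directions of `S` and everything in the
others. -/
theorem card_stage_mul_prod {i : ℕ} (d : Fin i → ℕ) (S : Finset (Fin i))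
    (x : ∀ k : Fin i, Fin (d k)) :
    (stage d S x).toFinset.card * ∏ k ∈ S, d k = ∏ k, d k := by
  have h : (stage d S x).toFinset =
      Fintype.piFinset fun k => if k ∈ S then {x k} else Finset.univ := by
    ext y
    rw [Set.mem_toFinset, Fintype.mem_piFinset]
    refine forall_congr' fun k => ?_
    by_cases hk : k ∈ S <;> simp [hk]
  rw [h, Fintype.card_piFinset, ← Finset.prod_ite_mem_eq S d, ← Finset.prod_mul_distrib]
  refine Finset.prod_congr rfl fun k _ => ?_
  by_cases hk : k ∈ S <;> simp [hk]

/-- Of two distinct indices at least one differs from `b`, hence has `d`-value at most `d a`. -/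
theorem prod_le_of_card_le_two {i : ℕ} (d : Fin i → ℕ) (hd : ∀ m, 2 ≤ d m)
    (a b : Fin i) (hb : ∀ k, d k ≤ d b) (ha : ∀ k, k ≠ b → d k ≤ d a)
    (S : Finset (Fin i)) (hS : S.card ≤ 2) : ∏ k ∈ S, d k ≤ d a * d b := by
  have h1 := hd a
  have h2 := hd b
  obtain h | h | h : S.card = 0 ∨ S.card = 1 ∨ S.card = 2 := by omega
  · rw [Finset.card_eq_zero.1 h, Finset.prod_empty]
    nlinarith
  · obtain ⟨k, rfl⟩ := Finset.card_eq_one.1 h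
    rw [Finset.prod_singleton]
    nlinarith [hb k]
  · obtain ⟨j, k, hjk, rfl⟩ := Finset.card_eq_two.1 h
    rw [Finset.prod_pair hjk]
    by_cases hj : j = b
    · rw [mul_comm]
      exact Nat.mul_le_mul (ha k fun hk => hjk (hj.trans hk.symm)) (hb j)
    · exact Nat.mul_le_mul (ha j hj) (hb k)

/-- Let `d b` be the largest and `d a` the second largest of the values `d_1, …, d_i`
(order statistics, witnessed by `a ≠ b`, `d k ≤ d b` for all `k`, and `d k ≤ d a` for all
`k ≠ b`). Then every staging of the level in which every stage has at most two context
variables has at most `d a * d b` stages, and some such staging attains this bound. -/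
theorem max_stages_at_most_two_context_variables
    (i : ℕ) (hi : 2 ≤ i) (d : Fin i → ℕ) (hd : ∀ m, 2 ≤ d m)
    (a b : Fin i) (hab : a ≠ b)
    (hb : ∀ k, d k ≤ d b) (ha : ∀ k, k ≠ b → d k ≤ d a) :
    (∀ 𝔰 : Set (Set (∀ k : Fin i, Fin (d k))), IsStaging d 𝔰 →
        (∀ s ∈ 𝔰, ∃ S x, s = stage d S x ∧ S.card ≤ 2) →
        𝔰.ncard ≤ d a * d b) ∧
    (∃ 𝔰 : Set (Set (∀ k : Fin i, Fin (d k))), IsStaging d 𝔰 ∧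
        (∀ s ∈ 𝔰, ∃ S x, s = stage d S x ∧ S.card ≤ 2) ∧
        𝔰.ncard = d a * d b) := by
  classical
  constructor
  · intro 𝔰 h𝔰 h2
    have hpos : 0 < ∏ k, d k := Finset.prod_pos fun k _ => by have := hd k; omega
    have hsum : ∑ s ∈ 𝔰.toFinset, s.toFinset.card ≤ ∏ k, d k := by
      rw [← Finset.card_biUnion]
      · refine (Finset.card_le_univ _).trans_eq ?_
        simp
      · intro s hs t ht hst
        exact Set.disjoint_toFinset.2
          (h𝔰.pairwiseDisjoint s (Set.mem_toFinset.1 hs) t (Set.mem_toFinset.1 ht) hst)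
    have hbig : ∀ s ∈ 𝔰.toFinset, ∏ k, d k ≤ s.toFinset.card * (d a * d b) := by
      intro s hs
      obtain ⟨S, x, rfl, hS⟩ := h2 s (Set.mem_toFinset.1 hs)
      rw [← card_stage_mul_prod d S x]
      exact Nat.mul_le_mul_left _ (prod_le_of_card_le_two d hd a b hb ha S hS)
    -- Sum the volume bound over all stages, then use that they fit disjointly into the level.
    have hcount := Finset.card_nsmul_le_sum _ _ _ hbig
    rw [← Finset.sum_mul, smul_eq_mul] at hcount
    rw [Set.ncard_eq_toFinset_card']
    refine Nat.le_of_mul_le_mul_right ?_ hpos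
    calc 𝔰.toFinset.card * ∏ k, d k
        ≤ (∑ s ∈ 𝔰.toFinset, s.toFinset.card) * (d a * d b) := hcount
      _ ≤ (∏ k, d k) * (d a * d b) := Nat.mul_le_mul_right _ hsum
      _ = d a * d b * ∏ k, d k := mul_comm _ _
  · let f : Fin (d a) × Fin (d b) → Set (∀ k : Fin i, Fin (d k)) :=
      fun p => {y | y a = p.1 ∧ y b = p.2}
    have hx : ∀ p : Fin (d a) × Fin (d b), ∃ x : ∀ k : Fin i, Fin (d k), x a = p.1 ∧ x b = p.2 := by
      intro p
      refine ⟨Function.update (Function.update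
        (fun k => ⟨0, by have := hd k; omega⟩) a p.1) b p.2, ?_, ?_⟩
      · rw [Function.update_of_ne hab, Function.update_self]
      · rw [Function.update_self]
    have hstage : ∀ s ∈ Set.range f, ∃ S x, s = stage d S x ∧ S.card ≤ 2 := by
      rintro _ ⟨p, rfl⟩
      obtain ⟨x, hxa, hxb⟩ := hx p
      refine ⟨{a, b}, x, ?_, Finset.card_le_two⟩
      ext y
      simp [f, stage, hxa, hxb]
    have hinj : Function.Injective f := by
      intro p q hpq
      obtain ⟨x, hxp⟩ := hx p
      have hxq : x ∈ f q := hpq ▸ hxp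
      exact Prod.ext (hxp.1.symm.trans hxq.1) (hxp.2.symm.trans hxq.2)
    refine ⟨Set.range f, ⟨?_, ?_, ?_, ?_⟩, hstage, ?_⟩
    · intro s hs
      obtain ⟨S, x, h, -⟩ := hstage s hs
      exact ⟨S, x, h⟩
    · rintro _ ⟨p, rfl⟩
      exact hx p
    · rintro _ ⟨p, rfl⟩ _ ⟨q, rfl⟩ hne
      refine Set.disjoint_left.2 fun y hp hq => hne ?_
      rw [show p = q from Prod.ext (hp.1.symm.trans hq.1) (hp.2.symm.trans hq.2)]
    · exact fun y => ⟨_, ⟨(y a, y b), rfl⟩, rfl, rfl⟩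
    · rw [← Nat.card_coe_set_eq, Nat.card_range_of_injective hinj]
      simp
end
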